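/- Assume h satisfies the control condition: there exist K, γ₀ > 0 such that |d·h'(c·d)| ≤ K(h(d)+1) for all d > 0 and all c with |c−1| ≤ γ₀. The equation κ + h'(tⁿ) + (n−1)κ(1/n + ln t) = 0 has a unique solution t = λ̄ > 0. If 0 < λ < λ̄ and r is a minimizer of Î over 𝒜_λ, then r(R) = λR for all R ∈ [0,1]. -/

import Mathlib

open Real MeasureTheory Filter Set
open scoped ENNReal NNReal

noncomputable section

/-- Radial stored energy `Φ(q, v, …, v) = (κ/n)(qⁿ + (n−1)vⁿ) + h(q v^{n−1})`,
the restriction of `Φ(v₁,…,vₙ) = (κ/n)(v₁ⁿ+⋯+vₙⁿ) + h(v₁⋯vₙ)` to points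
`(q, v, …, v)`. -/
def Phi (n : ℕ) (κ : ℝ) (h : ℝ → ℝ) (q v : ℝ) : ℝ :=
  (κ / n) * (q ^ n + ((n : ℝ) - 1) * v ^ n) + h (q * v ^ (n - 1))

/-- `Φ_{,1}(q, v, …, v) = κ q^{n−1} + v^{n−1} h'(q v^{n−1})`. -/
def Phi1 (n : ℕ) (κ : ℝ) (h' : ℝ → ℝ) (q v : ℝ) : ℝ :=
  κ * q ^ (n - 1) + v ^ (n - 1) * h' (q * v ^ (n - 1))

/-- `Φ_{,2}(q, v, …, v) = κ v^{n−1} + q v^{n−2} h'(q v^{n−1})`. -/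
def Phi2 (n : ℕ) (κ : ℝ) (h' : ℝ → ℝ) (q v : ℝ) : ℝ :=
  κ * v ^ (n - 1) + q * v ^ (n - 2) * h' (q * v ^ (n - 1))

/-- Radial Cauchy stress `T(q,v) = v^{1−n} Φ_{,1}(q,v,…,v) = κ(q/v)^{n−1} + h'(q v^{n−1})`. -/
def Tstress (n : ℕ) (κ : ℝ) (h' : ℝ → ℝ) (q v : ℝ) : ℝ :=
  κ * (q / v) ^ (n - 1) + h' (q * v ^ (n - 1))

/-- The determinant function `δ(R) = r'(R) (r(R)/R)^{n−1}`. -/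
def del (n : ℕ) (r r' : ℝ → ℝ) (R : ℝ) : ℝ :=
  r' R * (r R / R) ^ (n - 1)

/-- Hypotheses on `h : (0,∞) → [0,∞)`: it is `C²` with derivative `h'` and second
derivative `h''`, `h'' > 0`, `h(d) → ∞` as `d → 0⁺`, `h(d)/d → ∞` as `d → ∞`,
`h'(d) → −∞` as `d → 0⁺` and `h'(d) → ∞` as `d → ∞`. -/
structure GoodH (h h' h'' : ℝ → ℝ) : Prop where
  nonneg : ∀ d : ℝ, 0 < d → 0 ≤ h d
  deriv1 : ∀ d : ℝ, 0 < d → HasDerivAt h (h' d) d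
  deriv2 : ∀ d : ℝ, 0 < d → HasDerivAt h' (h'' d) d
  cont2 : ContinuousOn h'' (Set.Ioi 0)
  hpp_pos : ∀ d : ℝ, 0 < d → 0 < h'' d
  lim_zero : Tendsto h (nhdsWithin 0 (Set.Ioi 0)) atTop
  lim_growth : Tendsto (fun d => h d / d) atTop atTop
  dlim_zero : Tendsto h' (nhdsWithin 0 (Set.Ioi 0)) atBot
  dlim_top : Tendsto h' atTop atTop

/-- `r ∈ C²((0,1])`, with `r, r' > 0` on `(0,1]`, solving the radial equilibrium
equation `(d/dR)[R^{n−1} Φ_{,1}(r(R))] = (n−1) R^{n−2} Φ_{,2}(r(R))`. -/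
structure RadialSol (n : ℕ) (κ : ℝ) (h' : ℝ → ℝ) (r r' r'' : ℝ → ℝ) : Prop where
  pos : ∀ R ∈ Set.Ioc (0:ℝ) 1, 0 < r R
  derivPos : ∀ R ∈ Set.Ioc (0:ℝ) 1, 0 < r' R
  hasDeriv : ∀ R ∈ Set.Ioc (0:ℝ) 1, HasDerivWithinAt r (r' R) (Set.Ioc 0 1) R
  hasDeriv2 : ∀ R ∈ Set.Ioc (0:ℝ) 1, HasDerivWithinAt r' (r'' R) (Set.Ioc 0 1) R
  cont2 : ContinuousOn r'' (Set.Ioc 0 1)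
  equil : ∀ R ∈ Set.Ioc (0:ℝ) 1,
    HasDerivWithinAt (fun s => s ^ (n - 1) * Phi1 n κ h' (r' s) (r s / s))
      (((n : ℝ) - 1) * R ^ (n - 2) * Phi2 n κ h' (r' R) (r R / R)) (Set.Ioc 0 1) R


/-- Modified radial stored energy
`Φ̂(q,v,…,v) = (κ/n)qⁿ + h(q v^{n−1}) + κ q v^{n−1}((n−1)/n + ln(v^{n−1}))`. -/
def PhiHat (n : ℕ) (κ : ℝ) (h : ℝ → ℝ) (q v : ℝ) : ℝ :=
  (κ / n) * q ^ n + h (q * v ^ (n - 1)) +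
    κ * (q * v ^ (n - 1)) * (((n : ℝ) - 1) / n + ((n : ℝ) - 1) * Real.log v)

/-- `Φ̂_{,1}(q,v,…,v) = κ q^{n−1} + v^{n−1} h'(q v^{n−1}) + κ v^{n−1}((n−1)/n + (n−1) ln v)`. -/
def PhiHat1 (n : ℕ) (κ : ℝ) (h' : ℝ → ℝ) (q v : ℝ) : ℝ :=
  κ * q ^ (n - 1) + v ^ (n - 1) * h' (q * v ^ (n - 1)) +
    κ * v ^ (n - 1) * (((n : ℝ) - 1) / n + ((n : ℝ) - 1) * Real.log v)

/-- `Φ̂_{,2}(q,v,…,v) = q v^{n−2}(h'(q v^{n−1}) + κ + κ(n−1)(1/n + ln v))`. -/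
def PhiHat2 (n : ℕ) (κ : ℝ) (h' : ℝ → ℝ) (q v : ℝ) : ℝ :=
  q * v ^ (n - 2) *
    (h' (q * v ^ (n - 1)) + κ + κ * (((n : ℝ) - 1) * (1 / n + Real.log v)))

/-- Modified radial Cauchy stress
`T̂(q,v) = κ(q/v)^{n−1} + h'(q v^{n−1}) + (n−1)κ(1/n + ln v)`. -/
def THat (n : ℕ) (κ : ℝ) (h' : ℝ → ℝ) (q v : ℝ) : ℝ :=
  κ * (q / v) ^ (n - 1) + h' (q * v ^ (n - 1)) +
    ((n : ℝ) - 1) * κ * (1 / n + Real.log v)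

/-- `r ∈ C²((0,1])`, with `r, r' > 0` on `(0,1]`, solving the modified radial
equilibrium equation `(d/dR)[R^{n−1} Φ̂_{,1}(r(R))] = (n−1) R^{n−2} Φ̂_{,2}(r(R))`. -/
structure ModRadialSol (n : ℕ) (κ : ℝ) (h' : ℝ → ℝ) (r r' r'' : ℝ → ℝ) : Prop where
  pos : ∀ R ∈ Set.Ioc (0:ℝ) 1, 0 < r R
  derivPos : ∀ R ∈ Set.Ioc (0:ℝ) 1, 0 < r' R
  hasDeriv : ∀ R ∈ Set.Ioc (0:ℝ) 1, HasDerivWithinAt r (r' R) (Set.Ioc 0 1) R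
  hasDeriv2 : ∀ R ∈ Set.Ioc (0:ℝ) 1, HasDerivWithinAt r' (r'' R) (Set.Ioc 0 1) R
  cont2 : ContinuousOn r'' (Set.Ioc 0 1)
  equil : ∀ R ∈ Set.Ioc (0:ℝ) 1,
    HasDerivWithinAt (fun s => s ^ (n - 1) * PhiHat1 n κ h' (r' s) (r s / s))
      (((n : ℝ) - 1) * R ^ (n - 2) * PhiHat2 n κ h' (r' R) (r R / R)) (Set.Ioc 0 1) R


/-- The admissible set `𝒜_λ`: `r ∈ W^{1,1}(0,1)` (absolutely continuous with
integrable derivative `r'`), `r(1) = λ`, `r' > 0` a.e. in `(0,1)` and `r(0) ≥ 0`. -/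
structure Adm (lam : ℝ) (r r' : ℝ → ℝ) : Prop where
  intg : IntegrableOn r' (Set.Ioc 0 1)
  ftc : ∀ R ∈ Set.Icc (0:ℝ) 1, r R = r 0 + ∫ t in Set.Ioc 0 R, r' t
  derivPos : ∀ᵐ R ∂(volume.restrict (Set.Ioc (0:ℝ) 1)), 0 < r' R
  bc : r 1 = lam
  c0 : 0 ≤ r 0

/-- The modified energy functional `Î`, valued in `EReal` (it is the integral of
`R^{n−1} Φ̂(r'(R), r(R)/R, …, r(R)/R)` minus `(κ(n−1)/n) λⁿ ln λ`, the integral being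
defined as the difference of the lower integrals of the positive and negative parts). -/
def IHatE (n : ℕ) (κ lam : ℝ) (h : ℝ → ℝ) (r r' : ℝ → ℝ) : EReal :=
  (((∫⁻ R in Set.Ioc (0:ℝ) 1,
      ENNReal.ofReal (R ^ (n - 1) * PhiHat n κ h (r' R) (r R / R))) : ℝ≥0∞) : EReal)
  - (((∫⁻ R in Set.Ioc (0:ℝ) 1,
      ENNReal.ofReal (-(R ^ (n - 1) * PhiHat n κ h (r' R) (r R / R)))) : ℝ≥0∞) : EReal)
  - ((κ * ((n : ℝ) - 1) / n * lam ^ n * Real.log lam : ℝ) : EReal)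

/-! By the inequality `u - 1 - log u ≥ 0` at `u = (q / v) ^ (n - 1)`, the energy `Φ̂(q, v, …, v)`
is at least that of the dilation with the same determinant `d = q v ^ (n - 1)`, with equality only
for `q = v`. The energy of a dilation is `G d = κ d + h d + κ ((n - 1) / n) d log d`, which is
strictly convex, and `G' (tⁿ)` is the stress `T̂(t, t)`, whose unique zero is `λ̄`. Hence `Φ̂`
lies above the tangent of `G` at `λⁿ`, strictly unless `q = v = λ`. Integrating this tangent along
a map `r` gives the energy of the dilation `R ↦ λ R` minus `T̂(λ, λ) r(0)ⁿ / n`, because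
`n ∫ r' r ^ (n - 1) = λⁿ - r(0)ⁿ`. For `λ ≤ λ̄` the stress is nonpositive, so the dilation is
optimal, and a map doing no worse attains equality almost everywhere, so that `r(R) / R = λ`. -/

open scoped Topology

lemma tangent_lt_of_strictConvexOn {S : Set ℝ} {f : ℝ → ℝ} {f' x y : ℝ}
    (hf : StrictConvexOn ℝ S f) (hx : x ∈ S) (hy : y ∈ S) (hd : HasDerivAt f f' x)
    (hne : y ≠ x) : f x + f' * (y - x) < f y := by
  rcases hne.lt_or_gt with hyx | hxy
  · have hslope := hf.slope_lt_of_hasDerivAt hy hx hyx hd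
    rw [slope_def_field, div_lt_iff₀ (sub_pos.2 hyx)] at hslope
    linarith
  · have hslope := hf.lt_slope_of_hasDerivAt hx hy hxy hd
    rw [slope_def_field, lt_div_iff₀ (sub_pos.2 hxy)] at hslope
    linarith

lemma strictConvexOn_const_mul {E : Type*} [AddCommGroup E] [Module ℝ E] {S : Set E} {f : E → ℝ}
    {c : ℝ} (hc : 0 < c) (hf : StrictConvexOn ℝ S f) : StrictConvexOn ℝ S fun x ↦ c * f x := by
  refine ⟨hf.1, fun x hx y hy hxy a b ha hb hab ↦ ?_⟩
  calc c * f (a • x + b • y)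
      < c * (a • f x + b • f y) := mul_lt_mul_of_pos_left (hf.2 hx hy hxy ha hb hab) hc
    _ = a • (c * f x) + b • (c * f y) := by rw [mul_add, mul_smul_comm, mul_smul_comm]

lemma monotoneOn_of_convexOn_of_hasDerivAt {S : Set ℝ} {f f' : ℝ → ℝ} (hf : ConvexOn ℝ S f)
    (hd : ∀ x ∈ S, HasDerivAt f (f' x) x) : MonotoneOn f' S :=
  (hf.monotoneOn_deriv fun x hx ↦ (hd x hx).differentiableAt).congr fun x hx ↦ (hd x hx).deriv

lemma absolutelyContinuousOnInterval_pow {f : ℝ → ℝ} {a b : ℝ}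
    (hf : AbsolutelyContinuousOnInterval f a b) (n : ℕ) :
    AbsolutelyContinuousOnInterval (fun x ↦ f x ^ n) a b := by
  induction n with
  | zero => simpa only [pow_zero] using contDiffOn_const.absolutelyContinuousOnInterval
  | succ n ih => simpa only [pow_succ] using ih.fun_mul hf

lemma integral_mul_primitive_pow {g : ℝ → ℝ} {a b : ℝ} (hg : IntervalIntegrable g volume a b)
    (c : ℝ) (n : ℕ) :
    n * ∫ x in a..b, g x * (c + ∫ t in a..x, g t) ^ (n - 1) =
      (c + ∫ x in a..b, g x) ^ n - c ^ n := by
  have hac : AbsolutelyContinuousOnInterval (fun x ↦ c + ∫ t in a..x, g t) a b :=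
    contDiffOn_const.absolutelyContinuousOnInterval.fun_add
      (hg.absolutelyContinuousOnInterval_intervalIntegral left_mem_uIcc)
  calc n * ∫ x in a..b, g x * (c + ∫ t in a..x, g t) ^ (n - 1)
      = ∫ x in a..b, deriv (fun y ↦ (c + ∫ t in a..y, g t) ^ n) x := by
        rw [← intervalIntegral.integral_const_mul]
        refine intervalIntegral.integral_congr_ae ?_
        filter_upwards [hg.ae_hasDerivAt_integral] with x hx hmem
        have hderiv := ((hx (uIoc_subset_uIcc hmem) a left_mem_uIcc).const_add c).fun_pow n
        rw [hderiv.deriv]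
        ring
    _ = (c + ∫ x in a..b, g x) ^ n - c ^ n := by
        rw [(absolutelyContinuousOnInterval_pow hac n).integral_deriv_eq_sub]
        simp only [intervalIntegral.integral_same, add_zero]

section ExtendedIntegral

variable {α : Type*} [MeasurableSpace α] {μ : Measure α} {f g : α → ℝ}

/-- The extended integral `∫ f⁺ - ∫ f⁻` of a real function, defined without integrability
assumptions; the convention `⊤ - ⊤ = ⊥` of `EReal` applies when both parts are infinite. -/
def extendedIntegral (μ : Measure α) (f : α → ℝ) : EReal :=
  ((∫⁻ x, ENNReal.ofReal (f x) ∂μ : ℝ≥0∞) : EReal) -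
    ((∫⁻ x, ENNReal.ofReal (-f x) ∂μ : ℝ≥0∞) : EReal)

lemma extendedIntegral_eq_integral (hf : Integrable f μ) :
    extendedIntegral μ f = ((∫ x, f x ∂μ : ℝ) : EReal) := by
  rw [integral_eq_lintegral_pos_part_sub_lintegral_neg_part hf, EReal.coe_sub,
    EReal.coe_ennreal_toReal hf.lintegral_lt_top.ne,
    EReal.coe_ennreal_toReal hf.fun_neg.lintegral_lt_top.ne, extendedIntegral]

lemma extendedIntegral_congr_ae (hfg : f =ᵐ[μ] g) :
    extendedIntegral μ f = extendedIntegral μ g := by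
  rw [extendedIntegral, extendedIntegral,
    lintegral_congr_ae (hfg.mono fun x hx ↦ congrArg ENNReal.ofReal hx),
    lintegral_congr_ae (hfg.mono fun x hx ↦ congrArg (fun y ↦ ENNReal.ofReal (-y)) hx)]

lemma integrable_of_extendedIntegral_ne_top (hf : AEStronglyMeasurable f μ) (hg : Integrable g μ)
    (hgf : g ≤ᵐ[μ] f) (htop : extendedIntegral μ f ≠ ⊤) : Integrable f μ := by
  have hneg : ∫⁻ x, ENNReal.ofReal (-f x) ∂μ ≠ ⊤ :=
    ((lintegral_mono_ae <| hgf.mono fun x hx ↦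
      ENNReal.ofReal_le_ofReal (neg_le_neg hx)).trans_lt hg.fun_neg.lintegral_lt_top).ne
  have hpos : ∫⁻ x, ENNReal.ofReal (f x) ∂μ ≠ ⊤ := by
    intro hpos
    rw [extendedIntegral, hpos, ← EReal.coe_ennreal_toReal hneg, EReal.coe_ennreal_top,
      EReal.top_sub_coe] at htop
    exact htop rfl
  have hmax : Integrable (fun x ↦ max (f x) 0) μ := by
    refine (lintegral_ofReal_ne_top_iff_integrable (f := fun x ↦ max (f x) 0)
      (hf.sup aestronglyMeasurable_const) (.of_forall fun x ↦ le_max_right _ _)).1 ?_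
    simpa only [ENNReal.ofReal_max, ENNReal.ofReal_zero, max_zero] using hpos
  exact integrable_of_le_of_le hf hgf (.of_forall fun x ↦ le_max_left _ _) hg hmax

lemma ae_eq_of_extendedIntegral_le_integral (hf : AEStronglyMeasurable f μ) (hg : Integrable g μ)
    (hgf : g ≤ᵐ[μ] f) (hle : extendedIntegral μ f ≤ ((∫ x, g x ∂μ : ℝ) : EReal)) :
    g =ᵐ[μ] f := by
  have hfint : Integrable f μ := integrable_of_extendedIntegral_ne_top hf hg hgf
    (hle.trans_lt (EReal.coe_lt_top _)).ne
  rw [extendedIntegral_eq_integral hfint, EReal.coe_le_coe_iff] at hle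
  exact (integral_eq_iff_of_ae_le hg hfint hgf).1
    ((integral_mono_ae hg hfint hgf).antisymm hle)

end ExtendedIntegral

section StoredEnergy

variable {n : ℕ} {κ : ℝ} {h h' : ℝ → ℝ}

/-- The energy `Φ̂(t, …, t)` of a dilation, as a function of its determinant `d = tⁿ`. -/
def dilationEnergy (n : ℕ) (κ : ℝ) (h : ℝ → ℝ) (d : ℝ) : ℝ :=
  κ * d + h d + κ * (((n : ℝ) - 1) / n) * (d * Real.log d)

lemma THat_self (hn : n ≠ 0) {t : ℝ} (ht : t ≠ 0) :
    THat n κ h' t t = κ + h' (t ^ n) + ((n : ℝ) - 1) * κ * (1 / n + Real.log t) := by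
  rw [THat, div_self ht, one_pow, mul_one, mul_pow_sub_one hn]

lemma hasDerivAt_dilationEnergy (hn : n ≠ 0) {t : ℝ} (ht : t ≠ 0)
    (hd : HasDerivAt h (h' (t ^ n)) (t ^ n)) :
    HasDerivAt (dilationEnergy n κ h) (THat n κ h' t t) (t ^ n) := by
  have hsum := (((hasDerivAt_id (t ^ n)).const_mul κ).add hd).add
    ((Real.hasDerivAt_mul_log (pow_ne_zero n ht)).const_mul (κ * (((n : ℝ) - 1) / n)))
  refine hsum.congr_deriv ?_
  rw [THat_self hn ht, Real.log_pow]
  field_simp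
  ring

lemma strictConvexOn_dilationEnergy (hn : 2 ≤ n) (hκ : 0 < κ) (hconv : ConvexOn ℝ (Ioi 0) h) :
    StrictConvexOn ℝ (Ioi 0) (dilationEnergy n κ h) := by
  have hn1 : (0 : ℝ) < n - 1 := sub_pos.2 (by exact_mod_cast hn)
  have hlog : StrictConvexOn ℝ (Ioi 0) fun d : ℝ ↦ κ * (((n : ℝ) - 1) / n) * (d * Real.log d) := by
    have hcoeff : 0 < κ * (((n : ℝ) - 1) / n) := by positivity
    exact strictConvexOn_const_mul hcoeff
      (Real.strictConvexOn_mul_log.subset Ioi_subset_Ici_self (convex_Ioi 0))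
  exact (((convexOn_id (convex_Ioi 0)).smul hκ.le).add hconv).add_strictConvexOn hlog

lemma PhiHat_eq_dilationEnergy_add (hn : n ≠ 0) {q v : ℝ} (hq : 0 < q) (hv : 0 < v) :
    PhiHat n κ h q v = dilationEnergy n κ h (q * v ^ (n - 1)) +
      κ / n * (q * v ^ (n - 1)) *
        ((q / v) ^ (n - 1) - 1 - Real.log ((q / v) ^ (n - 1))) := by
  obtain ⟨m, rfl⟩ := Nat.exists_eq_add_one_of_ne_zero hn
  rw [PhiHat, dilationEnergy, add_tsub_cancel_right, Real.log_mul hq.ne' (pow_pos hv m).ne',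
    Real.log_pow, Real.log_pow, Real.log_div hq.ne' hv.ne', div_pow]
  push_cast
  field_simp
  ring

lemma PhiHat_self (hn : n ≠ 0) {t : ℝ} (ht : 0 < t) :
    PhiHat n κ h t t = dilationEnergy n κ h (t ^ n) := by
  rw [PhiHat_eq_dilationEnergy_add hn ht ht, mul_pow_sub_one hn, div_self ht.ne', one_pow,
    Real.log_one, sub_self, sub_self, mul_zero, add_zero]

lemma dilationEnergy_lt_PhiHat (hn : 2 ≤ n) (hκ : 0 < κ) {q v : ℝ} (hq : 0 < q) (hv : 0 < v)
    (hne : q ≠ v) : dilationEnergy n κ h (q * v ^ (n - 1)) < PhiHat n κ h q v := by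
  have hratio : 0 < q / v := div_pos hq hv
  have hratio_pow : (q / v) ^ (n - 1) ≠ 1 := fun h1 ↦
    hne ((div_eq_one_iff_eq hv.ne').1 ((pow_eq_one_iff_of_nonneg hratio.le (by lia)).1 h1))
  have hlog := Real.log_lt_sub_one_of_pos (pow_pos hratio (n - 1)) hratio_pow
  rw [PhiHat_eq_dilationEnergy_add (by lia) hq hv, lt_add_iff_pos_right]
  exact mul_pos (by positivity) (sub_pos.2 hlog)

lemma dilationEnergy_le_PhiHat (hn : 2 ≤ n) (hκ : 0 < κ) {q v : ℝ} (hq : 0 < q) (hv : 0 < v) :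
    dilationEnergy n κ h (q * v ^ (n - 1)) ≤ PhiHat n κ h q v := by
  rcases eq_or_ne q v with rfl | hne
  · rw [PhiHat_self (by lia) hq, mul_pow_sub_one (by lia)]
  · exact (dilationEnergy_lt_PhiHat hn hκ hq hv hne).le

section Tangent

variable {lam : ℝ}

lemma tangent_lt_dilationEnergy (hn : 2 ≤ n) (hκ : 0 < κ) (hconv : ConvexOn ℝ (Ioi 0) h)
    (hlam : 0 < lam) (hd : HasDerivAt h (h' (lam ^ n)) (lam ^ n)) {d : ℝ} (hd0 : 0 < d)
    (hne : d ≠ lam ^ n) :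
    dilationEnergy n κ h (lam ^ n) + THat n κ h' lam lam * (d - lam ^ n) <
      dilationEnergy n κ h d :=
  tangent_lt_of_strictConvexOn (strictConvexOn_dilationEnergy hn hκ hconv) (pow_pos hlam n) hd0
    (hasDerivAt_dilationEnergy (by lia) hlam.ne' hd) hne

lemma tangent_le_dilationEnergy (hn : 2 ≤ n) (hκ : 0 < κ) (hconv : ConvexOn ℝ (Ioi 0) h)
    (hlam : 0 < lam) (hd : HasDerivAt h (h' (lam ^ n)) (lam ^ n)) {d : ℝ} (hd0 : 0 < d) :
    dilationEnergy n κ h (lam ^ n) + THat n κ h' lam lam * (d - lam ^ n) ≤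
      dilationEnergy n κ h d := by
  rcases eq_or_ne d (lam ^ n) with rfl | hne
  · rw [sub_self, mul_zero, add_zero]
  · exact (tangent_lt_dilationEnergy hn hκ hconv hlam hd hd0 hne).le

lemma tangent_le_PhiHat (hn : 2 ≤ n) (hκ : 0 < κ) (hconv : ConvexOn ℝ (Ioi 0) h)
    (hlam : 0 < lam) (hd : HasDerivAt h (h' (lam ^ n)) (lam ^ n)) {q v : ℝ} (hq : 0 < q)
    (hv : 0 < v) :
    PhiHat n κ h lam lam + THat n κ h' lam lam * (q * v ^ (n - 1) - lam ^ n) ≤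
      PhiHat n κ h q v := by
  rw [PhiHat_self (by lia) hlam]
  exact (tangent_le_dilationEnergy hn hκ hconv hlam hd (mul_pos hq (pow_pos hv _))).trans
    (dilationEnergy_le_PhiHat hn hκ hq hv)

lemma tangent_lt_PhiHat (hn : 2 ≤ n) (hκ : 0 < κ) (hconv : ConvexOn ℝ (Ioi 0) h)
    (hlam : 0 < lam) (hd : HasDerivAt h (h' (lam ^ n)) (lam ^ n)) {q v : ℝ} (hq : 0 < q)
    (hv : 0 < v) (hne : v ≠ lam) :
    PhiHat n κ h lam lam + THat n κ h' lam lam * (q * v ^ (n - 1) - lam ^ n) <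
      PhiHat n κ h q v := by
  have hdet : 0 < q * v ^ (n - 1) := mul_pos hq (pow_pos hv _)
  rw [PhiHat_self (by lia) hlam]
  rcases eq_or_ne q v with rfl | hqv
  · have hdet_ne : q * q ^ (n - 1) ≠ lam ^ n := by
      rw [mul_pow_sub_one (by lia)]
      exact fun hpow ↦ hne ((pow_left_inj₀ hq.le hlam.le (by lia)).1 hpow)
    exact (tangent_lt_dilationEnergy hn hκ hconv hlam hd hdet hdet_ne).trans_le
      (dilationEnergy_le_PhiHat hn hκ hq hv)
  · exact (tangent_le_dilationEnergy hn hκ hconv hlam hd hdet).trans_lt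
      (dilationEnergy_lt_PhiHat hn hκ hq hv hqv)

end Tangent

lemma strictMonoOn_THat_self (hn : 2 ≤ n) (hκ : 0 < κ) (hmono : MonotoneOn h' (Ioi 0)) :
    StrictMonoOn (fun t ↦ THat n κ h' t t) (Ioi 0) := by
  intro a (ha : 0 < a) b (hb : 0 < b) hab
  have hn1 : (0 : ℝ) < n - 1 := sub_pos.2 (by exact_mod_cast hn)
  have hh' : h' (a ^ n) ≤ h' (b ^ n) :=
    hmono (pow_pos ha n) (pow_pos hb n) (pow_le_pow_left₀ ha.le hab.le n)
  simp only [THat_self (by lia : n ≠ 0) ha.ne', THat_self (by lia : n ≠ 0) hb.ne']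
  refine add_lt_add_of_le_of_lt (add_le_add_right hh' κ) ?_
  gcongr

lemma tendsto_THat_self_nhdsGT_zero (hn : 2 ≤ n) (hκ : 0 < κ) (hmono : MonotoneOn h' (Ioi 0)) :
    Tendsto (fun t ↦ THat n κ h' t t) (𝓝[>] 0) atBot := by
  have hn1 : (0 : ℝ) < n - 1 := sub_pos.2 (by exact_mod_cast hn)
  have hlog : Tendsto (fun t ↦ κ + h' 1 + ((n : ℝ) - 1) * κ * (1 / n + Real.log t)) (𝓝[>] 0)
      atBot :=
    tendsto_atBot_add_const_left _ _ ((tendsto_atBot_add_const_left _ _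
      Real.tendsto_log_nhdsGT_zero).const_mul_atBot (mul_pos hn1 hκ))
  refine tendsto_atBot_mono' _ ?_ hlog
  filter_upwards [Ioo_mem_nhdsGT one_pos] with t ht
  rw [THat_self (by lia) ht.1.ne']
  gcongr
  exact hmono (pow_pos ht.1 n) (mem_Ioi.2 one_pos) (pow_le_one₀ ht.1.le ht.2.le)

lemma tendsto_THat_self_atTop (hn : 2 ≤ n) (hκ : 0 < κ) (hmono : MonotoneOn h' (Ioi 0)) :
    Tendsto (fun t ↦ THat n κ h' t t) atTop atTop := by
  have hn1 : (0 : ℝ) < n - 1 := sub_pos.2 (by exact_mod_cast hn)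
  have hlog : Tendsto (fun t ↦ κ + h' 1 + ((n : ℝ) - 1) * κ * (1 / n + Real.log t)) atTop atTop :=
    tendsto_atTop_add_const_left _ _ ((tendsto_atTop_add_const_left _ _
      Real.tendsto_log_atTop).const_mul_atTop (mul_pos hn1 hκ))
  refine tendsto_atTop_mono' _ ?_ hlog
  filter_upwards [eventually_ge_atTop 1] with t ht
  have ht0 : 0 < t := one_pos.trans_le ht
  rw [THat_self (by lia) ht0.ne']
  gcongr
  exact hmono (mem_Ioi.2 one_pos) (pow_pos ht0 n) (one_le_pow₀ ht)

-- The zero comes from Darboux's theorem for the derivative of `t ↦ dilationEnergy n κ h (t ^ n)`.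
lemma exists_THat_self_eq_zero (hn : 2 ≤ n) (hκ : 0 < κ) (hmono : MonotoneOn h' (Ioi 0))
    (hd : ∀ d ∈ Ioi (0 : ℝ), HasDerivAt h (h' d) d) : ∃ t, 0 < t ∧ THat n κ h' t t = 0 := by
  have hn0 : n ≠ 0 := by lia
  have hderiv : ∀ t : ℝ, 0 < t → HasDerivAt (fun t ↦ dilationEnergy n κ h (t ^ n))
      (THat n κ h' t t * (n * t ^ (n - 1))) t := fun t ht ↦
    (hasDerivAt_dilationEnergy hn0 ht.ne' (hd _ (pow_pos ht n))).comp t (hasDerivAt_pow n t)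
  obtain ⟨a, ha, ha0⟩ := (((tendsto_THat_self_nhdsGT_zero hn hκ hmono).eventually_lt_atBot 0).and
    self_mem_nhdsWithin).exists
  obtain ⟨b, hb, hab⟩ := (((tendsto_THat_self_atTop hn hκ hmono).eventually_gt_atTop 0).and
    (eventually_ge_atTop a)).exists
  have hfactor : ∀ t : ℝ, 0 < t → 0 < n * t ^ (n - 1) := fun t ht ↦ by positivity
  obtain ⟨t, ht, hzero⟩ := exists_hasDerivWithinAt_eq_of_gt_of_lt hab
    (fun t ht ↦ (hderiv t (lt_of_lt_of_le ha0 ht.1)).hasDerivWithinAt)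
    (mul_neg_of_neg_of_pos ha (hfactor a ha0))
    (mul_pos hb (hfactor b (lt_of_lt_of_le ha0 hab)))
  have ht0 : 0 < t := lt_trans ha0 ht.1
  exact ⟨t, ht0, (mul_eq_zero.1 hzero).resolve_right (hfactor t ht0).ne'⟩

lemma existsUnique_THat_self_eq_zero (hn : 2 ≤ n) (hκ : 0 < κ) (hconv : ConvexOn ℝ (Ioi 0) h)
    (hd : ∀ d ∈ Ioi (0 : ℝ), HasDerivAt h (h' d) d) : ∃! t, 0 < t ∧ THat n κ h' t t = 0 := by
  have hmono : MonotoneOn h' (Ioi 0) := monotoneOn_of_convexOn_of_hasDerivAt hconv hd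
  obtain ⟨t, ht, htzero⟩ := exists_THat_self_eq_zero hn hκ hmono hd
  exact ⟨t, ⟨ht, htzero⟩, fun s hs ↦
    (strictMonoOn_THat_self hn hκ hmono).injOn hs.1 ht (hs.2.trans htzero.symm)⟩

end StoredEnergy

lemma aemeasurable_comp_of_continuousOn {α : Type*} [MeasurableSpace α] {μ : Measure α}
    {f : ℝ → ℝ} {g : α → ℝ} {s : Set ℝ} (hf : ContinuousOn f s) (hs : MeasurableSet s)
    (hg : AEMeasurable g μ) (hgs : ∀ᵐ x ∂μ, g x ∈ s) : AEMeasurable (fun x ↦ f (g x)) μ := by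
  have hrestrict : (μ.map g).restrict s = μ.map g :=
    Measure.restrict_eq_self_of_ae_mem ((ae_map_iff hg hs).2 hgs)
  have hfm : AEMeasurable f (μ.map g) := hrestrict ▸ hf.aemeasurable hs
  exact hfm.comp_aemeasurable hg

lemma aemeasurable_PhiHat {α : Type*} [MeasurableSpace α] {μ : Measure α} {n : ℕ} {κ : ℝ}
    {h : ℝ → ℝ} (hcont : ContinuousOn h (Ioi 0)) {q v : α → ℝ} (hq : AEMeasurable q μ)
    (hv : AEMeasurable v μ) (hdet : ∀ᵐ x ∂μ, 0 < q x * v x ^ (n - 1)) :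
    AEMeasurable (fun x ↦ PhiHat n κ h (q x) (v x)) μ := by
  have hdetm : AEMeasurable (fun x ↦ q x * v x ^ (n - 1)) μ := hq.mul (hv.pow_const _)
  have hhm : AEMeasurable (fun x ↦ h (q x * v x ^ (n - 1))) μ :=
    aemeasurable_comp_of_continuousOn hcont measurableSet_Ioi hdetm hdet
  exact (((hq.pow_const n).const_mul _).add hhm).add
    ((hdetm.const_mul κ).mul ((hv.log.const_mul _).const_add _))

lemma adm_dilation {lam : ℝ} (hlam : 0 < lam) : Adm lam (fun R ↦ lam * R) (fun _ ↦ lam) where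
  intg := integrableOn_const measure_Ioc_lt_top.ne
  ftc R hR := by
    rw [mul_zero, zero_add, ← intervalIntegral.integral_of_le hR.1, intervalIntegral.integral_const,
      sub_zero, smul_eq_mul, mul_comm]
  derivPos := .of_forall fun _ ↦ hlam
  bc := mul_one lam
  c0 := (mul_zero lam).ge

/-- The integrand `R^{n−1} Φ̂(r'(R), r(R)/R, …, r(R)/R)` of the modified energy `Î`. -/
def energyDensity (n : ℕ) (κ : ℝ) (h : ℝ → ℝ) (r r' : ℝ → ℝ) (R : ℝ) : ℝ :=
  R ^ (n - 1) * PhiHat n κ h (r' R) (r R / R)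

/-- The minorant of `energyDensity` obtained by replacing `Φ̂` with the tangent at `λⁿ` of
`dilationEnergy`, evaluated at the determinant `δ(R)`; its slope is the stress `T̂(λ, λ)`. -/
def tangentDensity (n : ℕ) (κ : ℝ) (h h' : ℝ → ℝ) (lam : ℝ) (r r' : ℝ → ℝ) (R : ℝ) : ℝ :=
  R ^ (n - 1) * (PhiHat n κ h lam lam + THat n κ h' lam lam * (del n r r' R - lam ^ n))

lemma IHatE_eq_extendedIntegral_sub (n : ℕ) (κ lam : ℝ) (h r r' : ℝ → ℝ) :
    IHatE n κ lam h r r' =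
      extendedIntegral (volume.restrict (Ioc 0 1)) (energyDensity n κ h r r') -
        ((κ * ((n : ℝ) - 1) / n * lam ^ n * Real.log lam : ℝ) : EReal) := rfl

lemma tangentDensity_ae_eq (n : ℕ) (κ lam : ℝ) (h h' r r' : ℝ → ℝ) :
    tangentDensity n κ h h' lam r r' =ᵐ[volume.restrict (Ioc 0 1)] fun R ↦
      (PhiHat n κ h lam lam - THat n κ h' lam lam * lam ^ n) * R ^ (n - 1) +
        THat n κ h' lam lam * (r' R * r R ^ (n - 1)) := by
  filter_upwards [ae_restrict_mem measurableSet_Ioc] with R hR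
  have hR0 : R ≠ 0 := hR.1.ne'
  rw [tangentDensity, del, div_pow]
  field_simp
  ring

lemma integrableOn_pow_Ioc {a b : ℝ} (m : ℕ) : IntegrableOn (fun x : ℝ ↦ x ^ m) (Ioc a b) :=
  (continuous_pow m).integrableOn_Ioc

lemma natCast_mul_integral_pow_sub_one {n : ℕ} (hn : n ≠ 0) :
    n * ∫ R in Ioc (0 : ℝ) 1, R ^ (n - 1) = 1 := by
  obtain ⟨m, rfl⟩ := Nat.exists_eq_add_one_of_ne_zero hn
  have hm : (m : ℝ) + 1 ≠ 0 := by positivity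
  rw [← intervalIntegral.integral_of_le zero_le_one, integral_pow, add_tsub_cancel_right,
    one_pow, zero_pow hn, sub_zero, Nat.cast_add_one, mul_one_div_cancel hm]

lemma extendedIntegral_energyDensity_dilation {n : ℕ} (hn : n ≠ 0) (κ lam : ℝ) (h : ℝ → ℝ) :
    extendedIntegral (volume.restrict (Ioc 0 1))
      (energyDensity n κ h (fun R ↦ lam * R) (fun _ ↦ lam)) =
        ((PhiHat n κ h lam lam / n : ℝ) : EReal) := by
  have hae : energyDensity n κ h (fun R ↦ lam * R) (fun _ ↦ lam)
      =ᵐ[volume.restrict (Ioc 0 1)] fun R ↦ PhiHat n κ h lam lam * R ^ (n - 1) := by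
    filter_upwards [ae_restrict_mem measurableSet_Ioc] with R hR
    rw [energyDensity, mul_div_cancel_right₀ lam hR.1.ne', mul_comm]
  rw [extendedIntegral_congr_ae hae,
    extendedIntegral_eq_integral ((integrableOn_pow_Ioc _).const_mul _), integral_const_mul,
    eq_one_div_of_mul_eq_one_right (natCast_mul_integral_pow_sub_one hn), mul_one_div]

lemma extendedIntegral_energyDensity_le_of_IHatE_le {n : ℕ} {κ lam : ℝ} {h r r' : ℝ → ℝ}
    (hn : n ≠ 0)
    (hle : IHatE n κ lam h r r' ≤ IHatE n κ lam h (fun R ↦ lam * R) (fun _ ↦ lam)) :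
    extendedIntegral (volume.restrict (Ioc 0 1)) (energyDensity n κ h r r') ≤
      ((PhiHat n κ h lam lam / n : ℝ) : EReal) := by
  simp only [IHatE_eq_extendedIntegral_sub] at hle
  rw [← extendedIntegral_energyDensity_dilation hn]
  have hadd := add_le_add_left hle
    ((κ * ((n : ℝ) - 1) / n * lam ^ n * Real.log lam : ℝ) : EReal)
  rwa [EReal.sub_add_cancel, EReal.sub_add_cancel] at hadd

namespace Adm

variable {n : ℕ} {κ lam : ℝ} {h h' r r' : ℝ → ℝ}

lemma intervalIntegrable (hr : Adm lam r r') : IntervalIntegrable r' volume 0 1 :=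
  (intervalIntegrable_iff_integrableOn_Ioc_of_le zero_le_one).2 hr.intg

lemma eq_add_intervalIntegral (hr : Adm lam r r') {R : ℝ} (hR : R ∈ Icc (0 : ℝ) 1) :
    r R = r 0 + ∫ t in (0 : ℝ)..R, r' t := by
  rw [hr.ftc R hR, intervalIntegral.integral_of_le hR.1]

lemma continuousOn (hr : Adm lam r r') : ContinuousOn r (Icc 0 1) :=
  (continuousOn_const.add (intervalIntegral.continuousOn_primitive
    ((integrableOn_Icc_iff_integrableOn_Ioc).2 hr.intg))).congr hr.ftc

lemma pos (hr : Adm lam r r') {R : ℝ} (hR : R ∈ Ioc (0 : ℝ) 1) : 0 < r R := by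
  have hsubset : Ioc 0 R ⊆ Ioc (0 : ℝ) 1 := Ioc_subset_Ioc_right hR.2
  have hderiv : ∀ᵐ t ∂volume.restrict (Ioc 0 R), 0 < r' t :=
    ae_restrict_of_ae_restrict_of_subset hsubset hr.derivPos
  have hsupport : Function.support r' =ᵐ[volume.restrict (Ioc 0 R)] univ :=
    eventuallyEq_univ.2 (hderiv.mono fun t ht ↦ ht.ne')
  have hintegral : 0 < ∫ t in Ioc 0 R, r' t := by
    rw [integral_pos_iff_support_of_nonneg_ae (hderiv.mono fun t ht ↦ ht.le)
      (hr.intg.mono_set hsubset), measure_congr hsupport, Measure.restrict_apply_univ,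
      Real.volume_Ioc, sub_zero]
    exact ENNReal.ofReal_pos.2 hR.1
  rw [hr.ftc R (Ioc_subset_Icc_self hR)]
  exact add_pos_of_nonneg_of_pos hr.c0 hintegral

lemma integrableOn_deriv_mul_pow (hr : Adm lam r r') (m : ℕ) :
    IntegrableOn (fun R ↦ r' R * r R ^ m) (Ioc 0 1) := by
  have hcont : ContinuousOn (fun R ↦ r R ^ m) (uIcc 0 1) := by
    rw [uIcc_of_le zero_le_one]
    exact hr.continuousOn.pow m
  exact (hr.intervalIntegrable.mul_continuousOn hcont).1

lemma natCast_mul_integral_deriv_mul_pow (hr : Adm lam r r') (n : ℕ) :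
    n * ∫ R in Ioc (0 : ℝ) 1, r' R * r R ^ (n - 1) = lam ^ n - r 0 ^ n := by
  calc n * ∫ R in Ioc (0 : ℝ) 1, r' R * r R ^ (n - 1)
      = n * ∫ R in (0 : ℝ)..1, r' R * (r 0 + ∫ t in (0 : ℝ)..R, r' t) ^ (n - 1) := by
        rw [intervalIntegral.integral_of_le zero_le_one]
        congr 1
        refine setIntegral_congr_fun measurableSet_Ioc fun R hR ↦ ?_
        rw [← hr.eq_add_intervalIntegral (Ioc_subset_Icc_self hR)]
    _ = lam ^ n - r 0 ^ n := by
        rw [integral_mul_primitive_pow hr.intervalIntegrable,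
          ← hr.eq_add_intervalIntegral (right_mem_Icc.2 zero_le_one), hr.bc]

lemma aemeasurable_energyDensity (hr : Adm lam r r') (hcont : ContinuousOn h (Ioi 0)) :
    AEMeasurable (energyDensity n κ h r r') (volume.restrict (Ioc 0 1)) := by
  have hrm : AEMeasurable r (volume.restrict (Ioc 0 1)) :=
    (hr.continuousOn.mono Ioc_subset_Icc_self).aemeasurable measurableSet_Ioc
  refine (aemeasurable_id.pow_const _).mul (aemeasurable_PhiHat hcont
    hr.intg.aestronglyMeasurable.aemeasurable (hrm.div aemeasurable_id) ?_)
  filter_upwards [hr.derivPos, ae_restrict_mem measurableSet_Ioc] with R hderiv hR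
  exact mul_pos hderiv (pow_pos (div_pos (hr.pos hR) hR.1) _)

lemma integrableOn_tangentDensity (hr : Adm lam r r') :
    IntegrableOn (tangentDensity n κ h h' lam r r') (Ioc 0 1) :=
  (((integrableOn_pow_Ioc _).const_mul _).add
    ((hr.integrableOn_deriv_mul_pow _).const_mul _)).congr (tangentDensity_ae_eq ..).symm

lemma natCast_mul_integral_tangentDensity (hr : Adm lam r r') (hn : n ≠ 0) :
    n * ∫ R in Ioc (0 : ℝ) 1, tangentDensity n κ h h' lam r r' R =
      PhiHat n κ h lam lam - THat n κ h' lam lam * r 0 ^ n := by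
  rw [integral_congr_ae (tangentDensity_ae_eq ..),
    integral_add ((integrableOn_pow_Ioc _).const_mul _)
      ((hr.integrableOn_deriv_mul_pow _).const_mul _), integral_const_mul, integral_const_mul]
  linear_combination
    (PhiHat n κ h lam lam - THat n κ h' lam lam * lam ^ n) * natCast_mul_integral_pow_sub_one hn +
      THat n κ h' lam lam * hr.natCast_mul_integral_deriv_mul_pow n

-- Opening a cavity of radius `r 0` only loses volume, and the stress weighting the volume is
-- nonpositive.
lemma PhiHat_div_le_integral_tangentDensity (hr : Adm lam r r') (hn : n ≠ 0)
    (hT : THat n κ h' lam lam ≤ 0) :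
    PhiHat n κ h lam lam / n ≤ ∫ R in Ioc (0 : ℝ) 1, tangentDensity n κ h h' lam r r' R := by
  have hn0 : (0 : ℝ) < n := by positivity
  have hcavity : THat n κ h' lam lam * r 0 ^ n ≤ 0 :=
    mul_nonpos_of_nonpos_of_nonneg hT (pow_nonneg hr.c0 n)
  rw [div_le_iff₀' hn0, hr.natCast_mul_integral_tangentDensity hn]
  linarith

lemma tangentDensity_ae_le_energyDensity (hr : Adm lam r r') (hn : 2 ≤ n) (hκ : 0 < κ)
    (hconv : ConvexOn ℝ (Ioi 0) h) (hlam : 0 < lam) (hd : HasDerivAt h (h' (lam ^ n)) (lam ^ n)) :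
    tangentDensity n κ h h' lam r r' ≤ᵐ[volume.restrict (Ioc 0 1)] energyDensity n κ h r r' := by
  filter_upwards [hr.derivPos, ae_restrict_mem measurableSet_Ioc] with R hderiv hR
  exact mul_le_mul_of_nonneg_left
    (tangent_le_PhiHat hn hκ hconv hlam hd hderiv (div_pos (hr.pos hR) hR.1)) (pow_nonneg hR.1.le _)

lemma ae_eq_mul_of_IHatE_le (hr : Adm lam r r') (hn : 2 ≤ n) (hκ : 0 < κ)
    (hconv : ConvexOn ℝ (Ioi 0) h) (hlam : 0 < lam) (hd : HasDerivAt h (h' (lam ^ n)) (lam ^ n))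
    (hT : THat n κ h' lam lam ≤ 0)
    (hle : IHatE n κ lam h r r' ≤ IHatE n κ lam h (fun R ↦ lam * R) (fun _ ↦ lam)) :
    ∀ᵐ R ∂volume.restrict (Ioc (0 : ℝ) 1), r R = lam * R := by
  have hn0 : n ≠ 0 := by lia
  have heq : tangentDensity n κ h h' lam r r' =ᵐ[volume.restrict (Ioc 0 1)]
      energyDensity n κ h r r' :=
    ae_eq_of_extendedIntegral_le_integral
      (hr.aemeasurable_energyDensity (hconv.continuousOn isOpen_Ioi)).aestronglyMeasurable
      hr.integrableOn_tangentDensity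
      (hr.tangentDensity_ae_le_energyDensity hn hκ hconv hlam hd)
      ((extendedIntegral_energyDensity_le_of_IHatE_le hn0 hle).trans
        (EReal.coe_le_coe_iff.2 (hr.PhiHat_div_le_integral_tangentDensity hn0 hT)))
  filter_upwards [heq, hr.derivPos, ae_restrict_mem measurableSet_Ioc] with R hReq hderiv hR
  rw [← div_eq_iff hR.1.ne']
  by_contra hne
  exact hReq.not_lt (mul_lt_mul_of_pos_left
    (tangent_lt_PhiHat hn hκ hconv hlam hd hderiv (div_pos (hr.pos hR) hR.1) hne)
    (pow_pos hR.1 _))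

lemma eqOn_mul_of_IHatE_le (hr : Adm lam r r') (hn : 2 ≤ n) (hκ : 0 < κ)
    (hconv : ConvexOn ℝ (Ioi 0) h) (hlam : 0 < lam) (hd : HasDerivAt h (h' (lam ^ n)) (lam ^ n))
    (hT : THat n κ h' lam lam ≤ 0)
    (hle : IHatE n κ lam h r r' ≤ IHatE n κ lam h (fun R ↦ lam * R) (fun _ ↦ lam)) :
    EqOn r (fun R ↦ lam * R) (Icc 0 1) := by
  have hae := hr.ae_eq_mul_of_IHatE_le hn hκ hconv hlam hd hT hle
  rw [Measure.restrict_congr_set Ioc_ae_eq_Icc] at hae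
  exact Measure.eqOn_Icc_of_ae_eq volume zero_ne_one hae hr.continuousOn
    (continuousOn_const.mul continuousOn_id)

end Adm

theorem stmt15_general {n : ℕ} (hn : 2 ≤ n) {κ : ℝ} (hκ : 0 < κ) {h h' : ℝ → ℝ}
    (hconv : ConvexOn ℝ (Ioi 0) h) (hd : ∀ d ∈ Ioi (0 : ℝ), HasDerivAt h (h' d) d) :
    (∃! t : ℝ, 0 < t ∧ κ + h' (t ^ n) + ((n : ℝ) - 1) * κ * (1 / n + Real.log t) = 0) ∧
    ∀ lam lamBar : ℝ, 0 < lam → lam ≤ lamBar →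
      κ + h' (lamBar ^ n) + ((n : ℝ) - 1) * κ * (1 / n + Real.log lamBar) = 0 →
      ∀ r r' : ℝ → ℝ, Adm lam r r' →
        IHatE n κ lam h r r' ≤ IHatE n κ lam h (fun R ↦ lam * R) (fun _ ↦ lam) →
        ∀ R ∈ Icc (0 : ℝ) 1, r R = lam * R := by
  have hn0 : n ≠ 0 := by lia
  refine ⟨?_, fun lam lamBar hlam hlamBar hzero r r' hr hle ↦ ?_⟩
  · refine (existsUnique_congr fun t ↦ and_congr_right fun ht ↦ ?_).1
      (existsUnique_THat_self_eq_zero hn hκ hconv hd)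
    rw [THat_self hn0 ht.ne']
  · have hBar : 0 < lamBar := hlam.trans_le hlamBar
    have hmono : MonotoneOn h' (Ioi 0) := monotoneOn_of_convexOn_of_hasDerivAt hconv hd
    have hT : THat n κ h' lam lam ≤ 0 := by
      rw [← THat_self hn0 hBar.ne'] at hzero
      exact ((strictMonoOn_THat_self hn hκ hmono).monotoneOn hlam hBar hlamBar).trans_eq hzero
    exact hr.eqOn_mul_of_IHatE_le hn hκ hconv hlam (hd _ (pow_pos hlam n)) hT hle

/-- the equation `κ + h'(tⁿ) + (n−1)κ(1/n + ln t) = 0` has a unique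
positive solution `λ̄`, and for `0 < λ < λ̄` any minimizer of `Î` over `𝒜_λ` is the
homogeneous deformation `r(R) = λR`. -/
theorem stmt15 (n : ℕ) (hn : 2 ≤ n) (κ : ℝ) (hκ : 0 < κ)
    (h h' h'' : ℝ → ℝ) (hh : GoodH h h' h'') (hconv : ConvexOn ℝ (Set.Ioi 0) h)
    (K γ₀ : ℝ) (hK : 0 < K) (hγ₀ : 0 < γ₀)
    (hctrl : ∀ d : ℝ, 0 < d → ∀ c : ℝ, |c - 1| ≤ γ₀ → |d * h' (c * d)| ≤ K * (h d + 1))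
    (lam : ℝ) (hlam : 0 < lam) :
    (∃! t : ℝ, 0 < t ∧ κ + h' (t ^ n) + ((n:ℝ) - 1) * κ * (1 / n + Real.log t) = 0) ∧
    (∀ lamBar : ℝ, 0 < lamBar →
      κ + h' (lamBar ^ n) + ((n:ℝ) - 1) * κ * (1 / n + Real.log lamBar) = 0 →
      lam < lamBar →
      ∀ r r' : ℝ → ℝ, Adm lam r r' →
        (∀ s s' : ℝ → ℝ, Adm lam s s' → IHatE n κ lam h r r' ≤ IHatE n κ lam h s s') →
        ∀ R ∈ Set.Icc (0:ℝ) 1, r R = lam * R) := by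
  obtain ⟨hroot, hdilation⟩ := stmt15_general hn hκ hconv hh.deriv1
  exact ⟨hroot, fun lamBar _ hzero hlt r r' hr hmin ↦
    hdilation lam lamBar hlam hlt.le hzero r r' hr (hmin _ _ (adm_dilation hlam))⟩

end
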